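/- Let R be a commutative ℚ-algebra, M and M' R-modules, and f : M → M, g : M' → M' nilpotent R-linear endomorphisms. For a nilpotent R-linear endomorphism u of an R-module, define log(1 + u) := Σ_{n≥1} (−1)^{n−1}·uⁿ/n (a finite sum). Then the endomorphism (1+f) ⊗ (1+g) − id of M ⊗_R M' is nilpotent, and log((1+f) ⊗ (1+g)) = log(1+f) ⊗ id_{M'} + id_M ⊗ log(1+g) as R-linear endomorphisms of M ⊗_R M'. -/

import Mathlib

open TensorProduct

/-- The truncated logarithm `log(1 + u) = Σ_{k=1}^{N} (−1)^{k−1} uᵏ / k` of a nilpotent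
endomorphism `u` (a finite sum, independent of `N` once `N` exceeds the nilpotency index). -/
noncomputable def nilLog (R : Type*) [CommRing R] [Algebra ℚ R] {M : Type*}
    [AddCommGroup M] [Module R M] (N : ℕ) (u : M →ₗ[R] M) : M →ₗ[R] M :=
  ∑ k ∈ Finset.Icc 1 N, algebraMap ℚ R ((-1) ^ (k - 1) / k) • u ^ k

/-!
Writing `1 + w = (1 + u) * (1 + v)`, the difference of `log (1 + w)` and `log (1 + u) + log (1 + v)`
is killed by every derivation, because a derivation turns `log` into the additive logarithmic
derivative. Applied to the deformation `u = t x`, `v = y` over `A[t]`, this makes the difference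
constant in `t`; it vanishes at `t = 0`, and `t = 1` is the assertion for commuting `x` and `y`.
On `M ⊗ M'` the endomorphisms `f ⊗ 1` and `1 ⊗ g` commute and
`(1 + f) ⊗ (1 + g) = (1 + f ⊗ 1) * (1 + 1 ⊗ g)`.
-/

open Polynomial

section TruncLog

variable (R : Type*) [CommRing R] [Algebra ℚ R] (N : ℕ)

/-- The Taylor polynomial of degree `N` of `log (1 + X)` at `0`. Evaluating it at `u` with
`u ^ N = 0` gives the logarithm of the unipotent element `1 + u` of any `R`-algebra; `N` counts
the terms after the vanishing constant one, whence the truncation order `N + 1`. -/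
noncomputable def truncLog : R[X] :=
  PowerSeries.trunc (N + 1) (PowerSeries.log R)

lemma one_add_X_mul_derivative_truncLog :
    (1 + X) * derivative (truncLog R N) = 1 - (-X) ^ N := by
  have geometric : derivative (truncLog R N) = ∑ k ∈ Finset.range N, (-X) ^ k := by
    rw [truncLog, ← PowerSeries.trunc_derivative, PowerSeries.deriv_log]
    ext n
    have neg_X_pow (k : ℕ) : (-X : R[X]) ^ k = C ((-1) ^ k) * X ^ k := by
      rw [neg_pow, C_pow, C_neg, C_1]
    simp_rw [neg_X_pow, finsetSum_coeff, coeff_C_mul_X_pow, Finset.sum_ite_eq, Finset.mem_range]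
    simp [PowerSeries.coeff_trunc]
  rw [geometric, ← sub_neg_eq_add, mul_neg_geom_sum]

lemma aeval_zero_truncLog {A : Type*} [Ring A] [Algebra R A] :
    aeval (0 : A) (truncLog R N) = 0 := by
  rw [← map_zero (algebraMap R A), aeval_algebraMap_apply, ← coeff_zero_eq_aeval_zero]
  simp [truncLog, PowerSeries.coeff_trunc]

lemma nilLog_eq_aeval_truncLog {M : Type*} [AddCommGroup M] [Module R M] (u : Module.End R M) :
    nilLog R N u = aeval u (truncLog R N) := by
  rw [nilLog, truncLog, aeval_def, PowerSeries.eval₂_trunc_eq_sum_range, Finset.range_eq_Ico,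
    Finset.sum_eq_sum_Ico_succ_bot N.succ_pos, ← Finset.Ico_add_one_right_eq_Icc]
  simp only [PowerSeries.coeff_log, if_true, map_zero, zero_mul, zero_add]
  refine Finset.sum_congr rfl fun k hk ↦ ?_
  obtain ⟨j, rfl⟩ := Nat.exists_eq_add_of_le' (Finset.mem_Ico.mp hk).1
  have sign : (-1 : ℚ) ^ (j + 1 + 1) = (-1) ^ j := by ring
  rw [if_neg j.succ_ne_zero, Algebra.smul_def, add_tsub_cancel_right, sign]

end TruncLog

section Derivation

variable {R A E : Type*} [CommRing R] [Algebra ℚ R] [CommRing A] [Algebra R A]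
  [AddCommGroup E] [Module R E] [Module A E] (D : Derivation R A E) {N : ℕ} {u v : A}

lemma one_add_smul_derivation_aeval_truncLog (hu : u ^ N = 0) :
    (1 + u) • D (aeval u (truncLog R N)) = D u := by
  have h := congrArg (aeval u) (one_add_X_mul_derivative_truncLog R N)
  simp only [map_mul, map_add, map_sub, map_pow, map_neg, map_one, aeval_X, neg_pow u, hu,
    mul_zero, sub_zero] at h
  rw [D.map_aeval, smul_smul, h, one_smul]

lemma derivation_aeval_truncLog_mul (hu : u ^ N = 0) (hv : v ^ N = 0)
    (huv : ((1 + u) * (1 + v) - 1) ^ N = 0) :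
    D (aeval ((1 + u) * (1 + v) - 1) (truncLog R N)) =
      D (aeval u (truncLog R N)) + D (aeval v (truncLog R N)) := by
  have isUnit_u : IsUnit (1 + u) := IsNilpotent.isUnit_one_add ⟨N, hu⟩
  have isUnit_v : IsUnit (1 + v) := IsNilpotent.isUnit_one_add ⟨N, hv⟩
  rw [← (isUnit_u.mul isUnit_v).smul_left_cancel]
  calc ((1 + u) * (1 + v)) • D (aeval ((1 + u) * (1 + v) - 1) (truncLog R N))
      = D ((1 + u) * (1 + v) - 1) := by
        rw [← one_add_smul_derivation_aeval_truncLog D huv, add_sub_cancel]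
    _ = (1 + v) • D u + (1 + u) • D v := by
        simp [D.leibniz, add_comm]
    _ = ((1 + u) * (1 + v)) • (D (aeval u (truncLog R N)) + D (aeval v (truncLog R N))) := by
        rw [← one_add_smul_derivation_aeval_truncLog D hu,
          ← one_add_smul_derivation_aeval_truncLog D hv]
        module

end Derivation

lemma eval_aeval {R A : Type*} [CommSemiring R] [CommSemiring A] [Algebra R A] (p : R[X])
    (w : A[X]) (t : A) :
    (aeval w p).eval t = aeval (w.eval t) p := by
  simpa using (aeval_algHom_apply ((aeval t).restrictScalars R : A[X] →ₐ[R] A) w p).symm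

lemma eval_eq_eval_of_derivative_eq_zero {A : Type*} [Semiring A] [IsAddTorsionFree A] {P : A[X]}
    (hP : derivative P = 0) (s t : A) : P.eval s = P.eval t := by
  rw [eq_C_of_derivative_eq_zero hP, eval_C, eval_C]

lemma one_add_mul_one_add_sub_one_pow_eq_zero {A : Type*} [Ring A] {x y : A} {a b N : ℕ}
    (hxy : Commute x y) (hx : x ^ a = 0) (hy : y ^ b = 0) (hN : a + b ≤ N + 1) :
    ((1 + x) * (1 + y) - 1) ^ N = 0 := by
  have split : (1 + x) * (1 + y) - 1 = x * (1 + y) + y := by noncomm_ring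
  have comm_one_add : Commute x (1 + y) := (Commute.one_right x).add_right hxy
  have hx' : (x * (1 + y)) ^ a = 0 := by rw [comm_one_add.mul_pow, hx, zero_mul]
  have comm : Commute (x * (1 + y)) y :=
    hxy.mul_left ((Commute.one_left y).add_left (Commute.refl y))
  rw [split]
  exact comm.add_pow_eq_zero_of_add_le_succ_of_pow_eq_zero hx' hy hN

section Additivity

variable {R A : Type*} [CommRing R] [Algebra ℚ R] {a b N : ℕ}

lemma aeval_truncLog_mul [CommRing A] [Algebra R A] {x y : A}
    (hx : x ^ a = 0) (hy : y ^ b = 0) (hN : a + b ≤ N) :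
    aeval ((1 + x) * (1 + y) - 1) (truncLog R N) =
      aeval x (truncLog R N) + aeval y (truncLog R N) := by
  let : Module ℚ A := Module.compHom A (algebraMap ℚ R)
  have : IsAddTorsionFree A := .of_module_rat A
  have hu : (X * C x) ^ a = 0 := by rw [mul_pow, ← C_pow, hx, C_0, mul_zero]
  have hv : C y ^ b = 0 := by rw [← C_pow, hy, C_0]
  let P : A[X] := aeval ((1 + X * C x) * (1 + C y) - 1) (truncLog R N) -
    (aeval (X * C x) (truncLog R N) + aeval (C y) (truncLog R N))
  have derivative_P : derivative P = 0 := by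
    rw [derivative_sub, derivative_add, sub_eq_zero]
    exact derivation_aeval_truncLog_mul (derivative'.restrictScalars R)
      (pow_eq_zero_of_le (le_of_add_le_left hN) hu) (pow_eq_zero_of_le (le_of_add_le_right hN) hv)
      (one_add_mul_one_add_sub_one_pow_eq_zero (Commute.all _ _) hu hv (Nat.le_succ_of_le hN))
  have h := eval_eq_eval_of_derivative_eq_zero derivative_P 1 0
  simpa [P, eval_aeval, aeval_zero_truncLog, sub_eq_zero] using h

open scoped IsMulCommutative in
lemma aeval_truncLog_mul_of_commute [Ring A] [Algebra R A] {x y : A} (hxy : Commute x y)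
    (hx : x ^ a = 0) (hy : y ^ b = 0) (hN : a + b ≤ N) :
    aeval ((1 + x) * (1 + y) - 1) (truncLog R N) =
      aeval x (truncLog R N) + aeval y (truncLog R N) := by
  let S := Algebra.adjoin R {x, y}
  have : IsMulCommutative S := Algebra.isMulCommutative_adjoin R (by
    rintro _ (rfl | rfl) _ (rfl | rfl)
    exacts [rfl, hxy, hxy.symm, rfl])
  let x' : S := ⟨x, Algebra.subset_adjoin (by simp)⟩
  let y' : S := ⟨y, Algebra.subset_adjoin (by simp)⟩
  have hx' : x' ^ a = 0 := Subtype.ext hx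
  have hy' : y' ^ b = 0 := Subtype.ext hy
  have h := congrArg S.val (aeval_truncLog_mul (R := R) hx' hy' hN)
  simp only [map_add, ← aeval_algHom_apply, map_sub, map_mul, map_one] at h
  exact h

end Additivity

section TensorProduct

variable {R M M' : Type*} [CommSemiring R] [AddCommMonoid M] [AddCommMonoid M']
  [Module R M] [Module R M'] (f : Module.End R M) (g : Module.End R M')

lemma rTensor_aeval (p : R[X]) : (aeval f p).rTensor M' = aeval (f.rTensor M') p :=
  (aeval_algHom_apply (Module.End.rTensorAlgHom R M M') f p).symm

lemma lTensor_aeval (p : R[X]) : (aeval g p).lTensor M = aeval (g.lTensor M) p :=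
  (aeval_algHom_apply (Module.End.lTensorAlgHom R M' M) g p).symm

lemma commute_rTensor_lTensor : Commute (f.rTensor M') (g.lTensor M) :=
  (LinearMap.rTensor_comp_lTensor M f g).trans (LinearMap.lTensor_comp_rTensor M f g).symm

lemma map_id_add_id_add : TensorProduct.map (LinearMap.id + f) (LinearMap.id + g) =
    (1 + f.rTensor M') * (1 + g.lTensor M) := by
  ext
  simp [add_tmul, tmul_add, add_add_add_comm]

end TensorProduct

/-- Let `R` be a commutative `ℚ`-algebra, `M`, `M'` `R`-modules, and
`f : M → M`, `g : M' → M'` nilpotent `R`-linear endomorphisms.  Then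
`(1+f) ⊗ (1+g) − id` is a nilpotent endomorphism of `M ⊗_R M'`, and
`log((1+f) ⊗ (1+g)) = log(1+f) ⊗ id + id ⊗ log(1+g)`. -/
theorem stmt12 (R : Type*) [CommRing R] [Algebra ℚ R]
    (M M' : Type*) [AddCommGroup M] [AddCommGroup M'] [Module R M] [Module R M']
    (f : M →ₗ[R] M) (g : M' →ₗ[R] M') (a b : ℕ) (hf : f ^ a = 0) (hg : g ^ b = 0) :
    IsNilpotent (TensorProduct.map (LinearMap.id + f) (LinearMap.id + g) - LinearMap.id) ∧
    nilLog R (a + b)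
        (TensorProduct.map (LinearMap.id + f) (LinearMap.id + g) - LinearMap.id)
      = TensorProduct.map (nilLog R (a + b) f) LinearMap.id
        + TensorProduct.map LinearMap.id (nilLog R (a + b) g) := by
  have hF : f.rTensor M' ^ a = 0 := by rw [LinearMap.rTensor_pow, hf, LinearMap.rTensor_zero]
  have hG : g.lTensor M ^ b = 0 := by rw [LinearMap.lTensor_pow, hg, LinearMap.lTensor_zero]
  have hFG := commute_rTensor_lTensor f g
  rw [map_id_add_id_add, ← Module.End.one_eq_id]
  refine ⟨⟨a + b, one_add_mul_one_add_sub_one_pow_eq_zero hFG hF hG (Nat.le_succ _)⟩, ?_⟩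
  simp only [nilLog_eq_aeval_truncLog, Module.End.one_eq_id, ← LinearMap.rTensor_def,
    ← LinearMap.lTensor_def, rTensor_aeval, lTensor_aeval]
  exact aeval_truncLog_mul_of_commute hFG hF hG le_rfl
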